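/- Let P be a Poisson (2-3)-algebra over a field F whose center ζ(P) has finite codimension d in P (as an F-subspace). Then P contains an ideal K with dim_F(K) ≤ d(d²-1)(d-2)/6 such that the quotient P/K is abelian, i.e. [x,y,z] ∈ K for all x,y,z ∈ P. -/

import Mathlib

/-- A Poisson (2-3)-algebra structure: the (possibly non-unital) commutative
associative `F`-algebra `P` carries an `F`-trilinear, alternating bracket
satisfying the fundamental identity and the Leibniz (2-3)-identity. -/
structure IsPoisson23 (F : Type*) [Field F] {P : Type*} [NonUnitalCommRing P]
    [Module F P] [SMulCommClass F P P] [IsScalarTower F P P]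
    (br : P → P → P → P) : Prop where
  add_fst : ∀ a₁ a₂ b c, br (a₁ + a₂) b c = br a₁ b c + br a₂ b c
  add_snd : ∀ a b₁ b₂ c, br a (b₁ + b₂) c = br a b₁ c + br a b₂ c
  add_trd : ∀ a b c₁ c₂, br a b (c₁ + c₂) = br a b c₁ + br a b c₂
  smul_fst : ∀ (l : F) (a b c : P), br (l • a) b c = l • br a b c
  smul_snd : ∀ (l : F) (a b c : P), br a (l • b) c = l • br a b c
  smul_trd : ∀ (l : F) (a b c : P), br a b (l • c) = l • br a b c
  alternating : ∀ a b c, a = b ∨ b = c ∨ a = c → br a b c = 0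
  fundamental : ∀ a₁ a₂ a₃ b c,
    br (br a₁ a₂ a₃) b c =
      br (br a₁ b c) a₂ a₃ + br a₁ (br a₂ b c) a₃ + br a₁ a₂ (br a₃ b c)
  leibniz : ∀ a₁ a₂ b c, br (a₁ * a₂) b c = a₂ * br a₁ b c + a₁ * br a₂ b c

section helpers

variable {F P : Type*} [Field F] [NonUnitalCommRing P]
    [Module F P] [SMulCommClass F P P] [IsScalarTower F P P]
    {br : P → P → P → P}

theorem IsPoisson23.swap12 (hP : IsPoisson23 F br) (a b c : P) :
    br a b c = - br b a c := by
  have h := hP.alternating (a + b) (a + b) c (Or.inl rfl)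
  rw [hP.add_fst, hP.add_snd, hP.add_snd, hP.alternating a a c (Or.inl rfl),
    hP.alternating b b c (Or.inl rfl), zero_add, add_zero] at h
  exact eq_neg_of_add_eq_zero_left h

theorem IsPoisson23.swap23 (hP : IsPoisson23 F br) (a b c : P) :
    br a b c = - br a c b := by
  have h := hP.alternating a (b + c) (b + c) (Or.inr (Or.inl rfl))
  rw [hP.add_snd, hP.add_trd, hP.add_trd, hP.alternating a b b (Or.inr (Or.inl rfl)),
    hP.alternating a c c (Or.inr (Or.inl rfl)), zero_add, add_zero] at h
  exact eq_neg_of_add_eq_zero_left h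

/-- The elements `x` whose bracket with `y, z` lies in `D`. -/
def brComap (hP : IsPoisson23 F br) (D : Submodule F P) (y z : P) : Submodule F P where
  carrier := {x | br x y z ∈ D}
  add_mem' := fun {a b} ha hb => by
    have := D.add_mem ha hb
    rwa [← hP.add_fst] at this
  zero_mem' := by
    have := hP.smul_fst 0 0 y z
    simp only [zero_smul] at this
    simp [this]
  smul_mem' := fun c x hx => by
    have := D.smul_mem c hx
    rwa [← hP.smul_fst] at this

/-- The elements `x` whose product with `y` lies in `D`. -/
def mulComap (D : Submodule F P) (y : P) : Submodule F P where
  carrier := {x | x * y ∈ D}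
  add_mem' := fun {a b} ha hb => by
    have := D.add_mem ha hb
    rwa [← add_mul] at this
  zero_mem' := by simp
  smul_mem' := fun c x hx => by
    have := D.smul_mem c hx
    rwa [← smul_mul_assoc] at this

end helpers

/-- Analogue of Schur's theorem: if the center of a Poisson (2-3)-algebra `P`
has finite codimension `d`, then `P` has an ideal `K` of dimension at most
`d(d²-1)(d-2)/6` such that `P/K` is abelian, i.e. `[x,y,z] ∈ K` for all
`x, y, z ∈ P`. -/
theorem schur_poisson23 {F P : Type*} [Field F] [NonUnitalCommRing P]
    [Module F P] [SMulCommClass F P P] [IsScalarTower F P P]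
    (br : P → P → P → P) (hP : IsPoisson23 F br)
    (Z : Submodule F P) (hZ : ∀ a : P, a ∈ Z ↔ ∀ b c : P, br a b c = 0)
    (d : ℕ) (hfin : FiniteDimensional F (P ⧸ Z))
    (hd : Module.finrank F (P ⧸ Z) = d) :
    ∃ K : Submodule F P,
      -- `K` is an ideal of `P`:
      (∀ a ∈ K, ∀ b : P, a * b ∈ K) ∧
      (∀ a ∈ K, ∀ b c : P, br a b c ∈ K) ∧
      -- `K` has finite dimension at most `d(d²-1)(d-2)/6`:
      FiniteDimensional F K ∧
      Module.finrank F K ≤ d * (d ^ 2 - 1) * (d - 2) / 6 ∧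
      -- and `P/K` is abelian:
      (∀ x y z : P, br x y z ∈ K) := by
  classical
  let bas := Module.finBasisOfFinrankEq F (P ⧸ Z) hd
  choose e he using fun i => Submodule.mkQ_surjective Z (bas i)
  have ind : ∀ S : Submodule F P, Z ≤ S → (∀ i, e i ∈ S) → ∀ x, x ∈ S := by
    intro S hZS heS x
    have h1 : x - ∑ i, bas.repr (Z.mkQ x) i • e i ∈ Z := by
      rw [← Submodule.Quotient.mk_eq_zero Z, ← Submodule.mkQ_apply, map_sub, map_sum]
      simp only [map_smul, he]
      rw [bas.sum_repr, sub_self]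
    have h2 : ∑ i, bas.repr (Z.mkQ x) i • e i ∈ S :=
      S.sum_mem fun i _ => S.smul_mem _ (heS i)
    have := S.add_mem (hZS h1) h2
    simpa using this
  choose f1 f2 f3 hf using fun s : {s // s ∈ Finset.powersetCard 3 (Finset.univ : Finset (Fin d))} =>
    Finset.card_eq_three.1 (Finset.mem_powersetCard.1 s.2).2
  let t := fun s => br (e (f1 s)) (e (f2 s)) (e (f3 s))
  let D : Submodule F P := Submodule.span F (Set.range t)
  have tD : ∀ s, t s ∈ D := fun s => Submodule.subset_span ⟨s, rfl⟩
  have sw12 : ∀ a b c, br a b c ∈ D → br b a c ∈ D := by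
    intro a b c h
    rw [hP.swap12]; exact D.neg_mem h
  have sw23 : ∀ a b c, br a b c ∈ D → br a c b ∈ D := by
    intro a b c h
    rw [hP.swap23]; exact D.neg_mem h
  have hE : ∀ i j k, br (e i) (e j) (e k) ∈ D := by
    intro i j k
    by_cases hij : i = j
    · rw [hP.alternating _ _ _ (Or.inl (congrArg e hij))]; exact D.zero_mem
    by_cases hjk : j = k
    · rw [hP.alternating _ _ _ (Or.inr (Or.inl (congrArg e hjk)))]; exact D.zero_mem
    by_cases hik : i = k
    · rw [hP.alternating _ _ _ (Or.inr (Or.inr (congrArg e hik)))]; exact D.zero_mem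
    have hs : ({i, j, k} : Finset (Fin d)) ∈ Finset.powersetCard 3 Finset.univ :=
      Finset.mem_powersetCard.2 ⟨Finset.subset_univ _, Finset.card_eq_three.2 ⟨i, j, k, hij, hik, hjk, rfl⟩⟩
    obtain ⟨h12, h13, h23, hss⟩ := hf ⟨_, hs⟩
    replace hss : ({i, j, k} : Finset (Fin d)) = _ := hss
    have ht := tD ⟨_, hs⟩
    simp only [t] at ht
    generalize f1 ⟨_, hs⟩ = a at *
    generalize f2 ⟨_, hs⟩ = b at *
    generalize f3 ⟨_, hs⟩ = c at *
    have hi : i = a ∨ i = b ∨ i = c := by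
      have : i ∈ ({i, j, k} : Finset (Fin d)) := by simp
      rw [hss] at this; simpa using this
    have hj : j = a ∨ j = b ∨ j = c := by
      have : j ∈ ({i, j, k} : Finset (Fin d)) := by simp
      rw [hss] at this; simpa using this
    have hk : k = a ∨ k = b ∨ k = c := by
      have : k ∈ ({i, j, k} : Finset (Fin d)) := by simp
      rw [hss] at this; simpa using this
    clear hss hs
    rcases hi with hi | hi | hi <;> rcases hj with hj | hj | hj <;>
      rcases hk with hk | hk | hk <;>
      first
      | exact absurd (hi.trans hj.symm) hij
      | exact absurd (hj.trans hk.symm) hjk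
      | exact absurd (hi.trans hk.symm) hik
      | (rw [hi, hj, hk]
         first
         | exact ht
         | exact sw12 _ _ _ ht
         | exact sw23 _ _ _ ht
         | exact sw12 _ _ _ (sw23 _ _ _ ht)
         | exact sw23 _ _ _ (sw12 _ _ _ ht)
         | exact sw12 _ _ _ (sw23 _ _ _ (sw12 _ _ _ ht)))
  have Zle : ∀ y z, Z ≤ brComap hP D y z := by
    intro y z x hx
    change br x y z ∈ D
    rw [(hZ x).1 hx]; exact D.zero_mem
  have hA1 : ∀ x j k, br x (e j) (e k) ∈ D := fun x j k =>
    ind (brComap hP D (e j) (e k)) (Zle _ _) (fun i => hE i j k) x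
  have hA2 : ∀ x y k, br y x (e k) ∈ D := fun x y k =>
    ind (brComap hP D x (e k)) (Zle _ _) (fun i => sw12 _ _ _ (hA1 x i k)) y
  have hA : ∀ x y z, br x y z ∈ D := fun x y z =>
    ind (brComap hP D y z) (Zle _ _)
      (fun i => sw12 _ _ _ (sw23 _ _ _ (hA2 z y i))) x
  have hDZ : ∀ a ∈ D, ∀ z ∈ Z, a * z ∈ D := by
    intro a ha z hz
    have : D ≤ mulComap D z := by
      refine Submodule.span_le.2 ?_
      rintro _ ⟨s, rfl⟩
      change br (e (f1 s)) (e (f2 s)) (e (f3 s)) * z ∈ D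
      have h := hP.leibniz (e (f1 s)) z (e (f2 s)) (e (f3 s))
      rw [(hZ z).1 hz, mul_zero, add_zero, mul_comm z] at h
      rw [← h]
      exact hA _ _ _
    exact this ha
  let g : {s // s ∈ Finset.powersetCard 3 (Finset.univ : Finset (Fin d))} × Option (Fin d) → P :=
    fun p => p.2.elim (t p.1) (fun l => e l * t p.1)
  let K : Submodule F P := Submodule.span F (Set.range g)
  have hDK : D ≤ K := by
    refine Submodule.span_le.2 ?_
    rintro _ ⟨s, rfl⟩
    exact Submodule.subset_span ⟨(s, none), rfl⟩
  have htK : ∀ s b, t s * b ∈ K := by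
    intro s b
    have := ind (mulComap K (t s))
      (fun z hz => by
        change z * t s ∈ K
        rw [mul_comm]
        exact hDK (hDZ _ (tD s) z hz))
      (fun l => Submodule.subset_span ⟨(s, some l), rfl⟩) b
    rw [mul_comm]
    exact this
  refine ⟨K, ?_, fun a _ b c => hDK (hA a b c), ?_, ?_, fun x y z => hDK (hA x y z)⟩
  · intro a ha b
    have : K ≤ mulComap K b := by
      refine Submodule.span_le.2 ?_
      rintro _ ⟨⟨s, _ | l⟩, rfl⟩
      · exact htK s b
      · change e l * t s * b ∈ K
        rw [mul_comm (e l), mul_assoc]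
        exact htK s _
    exact this ha
  · exact FiniteDimensional.span_of_finite F (Set.finite_range g)
  · refine (finrank_range_le_card (R := F) g).trans ?_
    rw [Fintype.card_prod, Fintype.card_coe, Finset.card_powersetCard, Fintype.card_option,
      Finset.card_univ, Fintype.card_fin]
    rw [Nat.le_div_iff_mul_le (by norm_num)]
    have h6 := Nat.descFactorial_eq_factorial_mul_choose d 3
    rcases d with _ | _ | d
    · simp
    · simp [Nat.choose]
    · simp [Nat.descFactorial_succ, Nat.factorial] at h6
      have h7 : (d + 1 + 1) ^ 2 - 1 = (d + 1) * (d + 3) := by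
        rw [Nat.sub_eq_iff_eq_add (Nat.one_le_pow _ _ (by omega))]; ring
      rw [h7]
      have h8 : d + 1 + 1 - 2 = d := by omega
      rw [h8]
      apply le_of_eq
      calc (d + 1 + 1).choose 3 * (d + 1 + 1 + 1) * 6
          = (6 * (d + 1 + 1).choose 3) * (d + 3) := by ring
        _ = _ := by rw [← h6]; ring
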